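/- Let 2 < p < 6 and 0 < μ < 2. Then F_{p,4} is bounded below on the set of u ∈ H¹(ℝ) with ‖u‖₂² = μ, there exists u₀ in this set with F_{p,4}(u₀) < 0, there exists a ground state of F_{p,4} at mass μ, and any two nonnegative ground states of F_{p,4} at mass μ coincide. -/

import Mathlib

open MeasureTheory Real Set

noncomputable section

/-- `u ∈ H¹(ℝ)` with weak derivative `u'`: `u` is continuous, square-integrable,
`u'` is square-integrable, and `u(b) − u(a) = ∫_a^b u'(t) dt` for all `a ≤ b`. -/
def IsH1 (u u' : ℝ → ℝ) : Prop :=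
  Continuous u ∧ Integrable (fun x => (u x) ^ 2) ∧ Integrable (fun x => (u' x) ^ 2) ∧
    ∀ a b : ℝ, a ≤ b → u b - u a = ∫ t in a..b, u' t

/-- The mass `‖u‖₂² = ∫_ℝ u(x)² dx`. -/
def mass (u : ℝ → ℝ) : ℝ := ∫ x, (u x) ^ 2

/-- `D_q(u) = (1/2)∫ u'² − (1/q)|u(0)|^q`. -/
def Dfun (q : ℝ) (u u' : ℝ → ℝ) : ℝ :=
  (1 / 2) * (∫ x, (u' x) ^ 2) - (1 / q) * |u 0| ^ q

/-- `F_{p,q}(u) = (1/2)∫ u'² − (1/p)∫ |u|^p − (1/q)|u(0)|^q`. -/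
def Ffun (p q : ℝ) (u u' : ℝ → ℝ) : ℝ :=
  (1 / 2) * (∫ x, (u' x) ^ 2) - (1 / p) * (∫ x, |u x| ^ p) - (1 / q) * |u 0| ^ q

/-!
Let `z` be a maximum point of `|u|`, put `d = |u z|`, and write `ω = frequency p q d`. The first
integral of the soliton equation at frequency `ω` has the form `u' ^ 2 = solitonSlope p ω u ^ 2`.
Completing the square in `u'` against `± solitonSlope p ω u`, with the sign pointing towards `z`,
turns `Ffun p q u u'` into a function `reducedEnergy` of `d` and the mass alone, plus two
nonnegative terms: one is the squared defect in the first-order equation, the other vanishes exactly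
when the maximum is attained at the origin. The standing wave of maximum `d` has no defect, but in
general the wrong mass.

The frequency is chosen so that `d` is a critical height of the energy at frequency `ω`, so the
derivative of the reduced energy is that of the frequency times `halfMass p q d - μ / 2`. Rescaling
the half-mass to an integral over `[0, 1]` shows that it increases strictly from `0`, past `μ / 2`.
Hence the reduced energy has a strict global minimum at the unique `c` with
`halfMass p q c = μ / 2`, and there the standing wave has mass `μ` and attains the lower bound. A
ground state has no defect either: its maximum is `c`, attained at the origin, and it solves the
first-order equation on both half-lines, where the solution is unique.
-/

open Filter
open scoped Topology NNReal

variable {u u' v v' : ℝ → ℝ} {a b : ℝ}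

/-- `u ∈ H¹(ℝ)` with weak derivative `u'`, with `u'` a measurable (hence locally integrable)
function. In `IsH1` measurability is not automatic: there the interval integral of a `u'` that is
not locally integrable takes the junk value `0`. -/
structure IsSobolev (u u' : ℝ → ℝ) : Prop where
  continuous : Continuous u
  memLp : MemLp u 2
  memLp_deriv : MemLp u' 2
  integral_eq_sub : ∀ a b, ∫ t in a..b, u' t = u b - u a

lemma eq_zero_of_integrable_sq_of_eventually_eq {f : ℝ → ℝ} {c : ℝ} {l : Filter ℝ}
    (hl : ∀ s ∈ l, volume s = ⊤) (hf : Integrable fun x => f x ^ 2) (hc : ∀ᶠ x in l, f x = c) :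
    c = 0 := by
  have hlim : Tendsto (fun x => f x ^ 2) l (𝓝 (c ^ 2)) :=
    tendsto_const_nhds.congr' (hc.mono fun x hx => by simp only [hx])
  exact pow_eq_zero_iff two_ne_zero |>.1 (hf.integrableAtFilter l |>.eq_zero_of_tendsto hl hlim)

lemma volume_eq_top_of_mem_atTop {s : Set ℝ} (hs : s ∈ atTop) : volume s = ⊤ := by
  obtain ⟨x, hx⟩ := mem_atTop_sets.1 hs
  exact measure_mono_top (s₁ := Ici x) hx Real.volume_Ici

lemma volume_eq_top_of_mem_atBot {s : Set ℝ} (hs : s ∈ atBot) : volume s = ⊤ := by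
  obtain ⟨x, hx⟩ := mem_atBot_sets.1 hs
  exact measure_mono_top (s₁ := Iic x) hx Real.volume_Iic

namespace IsH1

lemma eq_of_not_intervalIntegrable (h : IsH1 u u') (hab : a ≤ b)
    (hI : ¬ IntervalIntegrable u' volume a b) {x y : ℝ} (hx : x ≤ a) (hy : b ≤ y) :
    u y = u x := by
  have hxy : ¬ IntervalIntegrable u' volume x y := fun hxy =>
    hI (hxy.mono_set (by
      rw [uIcc_of_le hab, uIcc_of_le (hx.trans (hab.trans hy))]
      exact Icc_subset_Icc hx hy))
  have := h.2.2.2 x y (hx.trans (hab.trans hy))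
  rwa [intervalIntegral.integral_undef hxy, sub_eq_zero] at this

lemma eq_zero_of_not_intervalIntegrable (h : IsH1 u u') (hab : a ≤ b)
    (hI : ¬ IntervalIntegrable u' volume a b) : u a = 0 ∧ u b = 0 := by
  have ha : u a = 0 := eq_zero_of_integrable_sq_of_eventually_eq
    (fun _ => volume_eq_top_of_mem_atTop) h.2.1
    ((eventually_ge_atTop b).mono fun x hx => h.eq_of_not_intervalIntegrable hab hI le_rfl hx)
  exact ⟨ha, (h.eq_of_not_intervalIntegrable hab hI le_rfl le_rfl).trans ha⟩

lemma intervalIntegrable (h : IsH1 u u') (hm : mass u ≠ 0) (a b : ℝ) :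
    IntervalIntegrable u' volume a b := by
  wlog hab : a ≤ b generalizing a b
  · exact (this b a (le_of_not_ge hab)).symm
  by_contra hI
  have hzero (x : ℝ) : u x = 0 := by
    by_cases hl : IntervalIntegrable u' volume (min a x) x
    · refine (h.eq_zero_of_not_intervalIntegrable (b := max b x) (le_max_right b x) fun hr => ?_).1
      refine hI ((hl.trans hr).mono_set ?_)
      rw [uIcc_of_le hab, uIcc_of_le ((min_le_right a x).trans (le_max_right b x))]
      exact Icc_subset_Icc (min_le_left a x) (le_max_left b x)
    · exact (h.eq_zero_of_not_intervalIntegrable (min_le_right a x) hl).2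
  exact hm (by simp [mass, hzero])

lemma isSobolev (h : IsH1 u u') (hm : mass u ≠ 0) : IsSobolev u u' := by
  have hmeas : AEStronglyMeasurable u' :=
    (aecover_Ioc tendsto_neg_atTop_atBot tendsto_id).aestronglyMeasurable fun r : ℝ =>
      (h.intervalIntegrable hm (-r) r).aestronglyMeasurable
  refine ⟨h.1, (memLp_two_iff_integrable_sq h.1.aestronglyMeasurable).2 h.2.1,
    (memLp_two_iff_integrable_sq hmeas).2 h.2.2.1, fun a b => ?_⟩
  rcases le_total a b with hab | hba
  · exact (h.2.2.2 a b hab).symm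
  · rw [intervalIntegral.integral_symm, ← h.2.2.2 b a hba, neg_sub]

end IsH1

lemma absolutelyContinuousOnInterval_comp_of_lipschitzOnWith {φ : ℝ → ℝ} {s : Set ℝ} {K : ℝ≥0}
    (hφ : LipschitzOnWith K φ s) (hu : AbsolutelyContinuousOnInterval u a b)
    (hs : MapsTo u (uIcc a b) s) : AbsolutelyContinuousOnInterval (fun x => φ (u x)) a b := by
  unfold AbsolutelyContinuousOnInterval at hu ⊢
  refine squeeze_zero' (.of_forall fun E => Finset.sum_nonneg fun i _ => dist_nonneg) ?_
    (by simpa using hu.const_mul (K : ℝ))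
  filter_upwards [mem_inf_of_right (mem_principal_self _)] with E hE
  rw [Finset.mul_sum]
  exact Finset.sum_le_sum fun i hi =>
    hφ.dist_le_mul _ (hs (hE.1 i hi).1) _ (hs (hE.1 i hi).2)

namespace IsSobolev

lemma isH1 (h : IsSobolev u u') : IsH1 u u' :=
  ⟨h.continuous, h.memLp.integrable_sq, h.memLp_deriv.integrable_sq,
    fun a b _ => (h.integral_eq_sub a b).symm⟩

lemma locallyIntegrable_deriv (h : IsSobolev u u') : LocallyIntegrable u' :=
  h.memLp_deriv.locallyIntegrable (by norm_num)

lemma intervalIntegrable_deriv (h : IsSobolev u u') (a b : ℝ) : IntervalIntegrable u' volume a b :=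
  (h.locallyIntegrable_deriv.integrableOn_isCompact isCompact_uIcc).intervalIntegrable

lemma eq_add_integral (h : IsSobolev u u') (a : ℝ) : u = fun x => u a + ∫ t in a..x, u' t := by
  ext x
  rw [h.integral_eq_sub]
  ring

lemma ae_hasDerivAt (h : IsSobolev u u') : ∀ᵐ x, HasDerivAt u (u' x) x := by
  filter_upwards [LocallyIntegrable.ae_hasDerivAt_integral h.locallyIntegrable_deriv] with x hx
  rw [h.eq_add_integral 0]
  exact (hx 0).const_add (u 0)

lemma absolutelyContinuousOnInterval (h : IsSobolev u u') (a b : ℝ) :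
    AbsolutelyContinuousOnInterval u a b := by
  rw [h.eq_add_integral a]
  have hconst : AbsolutelyContinuousOnInterval (fun _ : ℝ => u a) a b :=
    (LipschitzWith.const (u a)).lipschitzOnWith.absolutelyContinuousOnInterval
  exact hconst.add (h.intervalIntegrable_deriv a b
    |>.absolutelyContinuousOnInterval_intervalIntegral left_mem_uIcc)

lemma integral_comp_mul_deriv (h : IsSobolev u u') {G g : ℝ → ℝ} (hg : Continuous g)
    (hG : ∀ s, HasDerivAt G (g s) s) (a b : ℝ) :
    ∫ t in a..b, g (u t) * u' t = G (u b) - G (u a) := by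
  obtain ⟨R, hR⟩ := isCompact_uIcc.exists_bound_of_continuousOn
    (h.continuous.continuousOn (s := uIcc a b))
  have hmaps : MapsTo u (uIcc a b) (Icc (-R) R) := fun x hx => abs_le.1 (hR x hx)
  obtain ⟨C, hC⟩ := isCompact_Icc.exists_bound_of_continuousOn
    (hg.continuousOn (s := Icc (-R) R))
  have hlip : LipschitzOnWith C.toNNReal G (Icc (-R) R) :=
    (convex_Icc (-R) R).lipschitzOnWith_of_nnnorm_hasDerivWithin_le
      (fun s _ => (hG s).hasDerivWithinAt) fun s hs => by
        rw [← NNReal.coe_le_coe, coe_nnnorm]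
        exact (hC s hs).trans (le_coe_toNNReal C)
  have hac := absolutelyContinuousOnInterval_comp_of_lipschitzOnWith hlip
    (h.absolutelyContinuousOnInterval a b) hmaps
  rw [← hac.integral_deriv_eq_sub]
  refine intervalIntegral.integral_congr_ae ?_
  filter_upwards [h.ae_hasDerivAt] with x hx _
  exact ((hG (u x)).comp x hx).deriv.symm

lemma integral_two_mul_mul_deriv (h : IsSobolev u u') (a b : ℝ) :
    ∫ t in a..b, 2 * (u t * u' t) = u b ^ 2 - u a ^ 2 := by
  simpa only [mul_assoc] using h.integral_comp_mul_deriv (g := fun s => 2 * s)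
    (G := fun s => s ^ 2) (by fun_prop) (fun s => by simpa using hasDerivAt_pow 2 s) a b

lemma integrable_two_mul_mul_deriv (h : IsSobolev u u') :
    Integrable fun t => 2 * (u t * u' t) :=
  (h.memLp.integrable_mul h.memLp_deriv).const_mul 2

lemma tendsto_zero_of_tendsto_sq (h : IsSobolev u u') {l : Filter ℝ} {L : ℝ}
    (hl : ∀ s ∈ l, volume s = ⊤) (hL : Tendsto (fun x => u x ^ 2) l (𝓝 L)) :
    Tendsto u l (𝓝 0) := by
  rw [(h.memLp.integrable_sq.integrableAtFilter l).eq_zero_of_tendsto hl hL] at hL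
  refine (tendsto_zero_iff_abs_tendsto_zero u).2 ?_
  simpa [Function.comp_def, sqrt_sq_eq_abs] using hL.sqrt

lemma tendsto_atTop (h : IsSobolev u u') : Tendsto u atTop (𝓝 0) := by
  refine h.tendsto_zero_of_tendsto_sq (fun _ => volume_eq_top_of_mem_atTop)
    (L := u 0 ^ 2 + ∫ t in Ioi 0, 2 * (u t * u' t)) ?_
  refine ((intervalIntegral_tendsto_integral_Ioi 0 h.integrable_two_mul_mul_deriv.integrableOn
    tendsto_id).const_add (u 0 ^ 2)).congr fun x => ?_
  rw [id, h.integral_two_mul_mul_deriv, add_sub_cancel]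

lemma tendsto_atBot (h : IsSobolev u u') : Tendsto u atBot (𝓝 0) := by
  refine h.tendsto_zero_of_tendsto_sq (fun _ => volume_eq_top_of_mem_atBot)
    (L := u 0 ^ 2 - ∫ t in Iic 0, 2 * (u t * u' t)) ?_
  refine ((intervalIntegral_tendsto_integral_Iic 0 h.integrable_two_mul_mul_deriv.integrableOn
    tendsto_id).const_sub (u 0 ^ 2)).congr fun x => ?_
  rw [id, h.integral_two_mul_mul_deriv, sub_sub_cancel]

lemma exists_abs_le (h : IsSobolev u u') : ∃ z, ∀ x, |u x| ≤ |u z| := by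
  by_cases hu : ∀ x, u x = 0
  · exact ⟨0, fun x => by simp [hu]⟩
  obtain ⟨x₀, hx₀⟩ := not_forall.1 hu
  have hlim : Tendsto (fun x => |u x|) (cocompact ℝ) (𝓝 0) := by
    rw [cocompact_eq_atBot_atTop]
    exact (tendsto_zero_iff_abs_tendsto_zero u).1 (h.tendsto_atBot.sup h.tendsto_atTop)
  exact h.continuous.abs.exists_forall_ge' x₀ (hlim.eventually_le_const (abs_pos.2 hx₀))

end IsSobolev

/-! ### Completing the square -/

/-- The unit direction on the line pointing from `x` towards `z`. -/
def towards (z x : ℝ) : ℝ := if x ≤ z then 1 else -1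

lemma measurable_towards (z : ℝ) : Measurable (towards z) :=
  Measurable.ite measurableSet_Iic measurable_const measurable_const

lemma abs_towards (z x : ℝ) : |towards z x| = 1 := by
  unfold towards
  split_ifs <;> norm_num

lemma towards_sq (z x : ℝ) : towards z x ^ 2 = 1 := by
  rw [← sq_abs, abs_towards, one_pow]

lemma memLp_towards_mul {f : ℝ → ℝ} (hf : MemLp f 2) (z : ℝ) :
    MemLp (fun x => towards z x * f x) 2 :=
  hf.of_le ((measurable_towards z).aestronglyMeasurable.mul hf.1) <| .of_forall fun x => by
    rw [norm_mul, norm_eq_abs, abs_towards, one_mul]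

lemma integral_towards_mul {f : ℝ → ℝ} (hf : Integrable f) (z : ℝ) :
    ∫ x, towards z x * f x = (∫ x in Iic z, f x) - ∫ x in Ioi z, f x := by
  have hσ : (fun x => towards z x * f x) =
      fun x => (Iic z).indicator f x - (Ioi z).indicator f x := by
    ext x
    by_cases hx : x ≤ z <;> simp [towards, indicator, hx, not_lt.2, not_le.1]
  rw [hσ, integral_sub (hf.indicator measurableSet_Iic) (hf.indicator measurableSet_Ioi),
    integral_indicator measurableSet_Iic, integral_indicator measurableSet_Ioi]

namespace IsSobolev

lemma integral_towards_mul_comp_mul_deriv (h : IsSobolev u u') {G g : ℝ → ℝ} (hg : Continuous g)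
    (hG : ∀ s, HasDerivAt G (g s) s) (hG₀ : G 0 = 0) (hgu : MemLp (fun x => g (u x)) 2) (z : ℝ) :
    ∫ x, towards z x * (g (u x) * u' x) = 2 * G (u z) := by
  have hint : Integrable fun x => g (u x) * u' x := hgu.integrable_mul h.memLp_deriv
  have hlim {l : Filter ℝ} (hl : Tendsto u l (𝓝 0)) : Tendsto (fun x => G (u x)) l (𝓝 0) := by
    have hG_lim := (hG 0).continuousAt.tendsto.comp hl
    rwa [hG₀] at hG_lim
  have htop : ∫ x in Ioi z, g (u x) * u' x = -G (u z) :=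
    tendsto_nhds_unique (intervalIntegral_tendsto_integral_Ioi z hint.integrableOn tendsto_id)
      (by simpa [h.integral_comp_mul_deriv hg hG] using (hlim h.tendsto_atTop).sub_const (G (u z)))
  have hbot : ∫ x in Iic z, g (u x) * u' x = G (u z) :=
    tendsto_nhds_unique (intervalIntegral_tendsto_integral_Iic z hint.integrableOn tendsto_id)
      (by simpa [h.integral_comp_mul_deriv hg hG] using (hlim h.tendsto_atBot).const_sub (G (u z)))
  rw [integral_towards_mul hint, htop, hbot]
  ring

theorem integral_deriv_sq_add_integral_comp_sq (h : IsSobolev u u') {G g : ℝ → ℝ}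
    (hg : Continuous g) (hG : ∀ s, HasDerivAt G (g s) s) (hG₀ : G 0 = 0)
    (hgu : MemLp (fun x => g (u x)) 2) (z : ℝ) :
    (∫ x, u' x ^ 2) + ∫ x, g (u x) ^ 2 =
      (∫ x, (u' x - towards z x * g (u x)) ^ 2) + 4 * G (u z) := by
  have hcross : Integrable fun x => 2 * (towards z x * (g (u x) * u' x)) := by
    simpa only [Pi.mul_apply, mul_assoc] using
      ((memLp_towards_mul hgu z).integrable_mul h.memLp_deriv).const_mul 2
  have hsquares : Integrable fun x => u' x ^ 2 + g (u x) ^ 2 :=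
    h.memLp_deriv.integrable_sq.add hgu.integrable_sq
  have hexp : ∀ x, (u' x - towards z x * g (u x)) ^ 2 =
      u' x ^ 2 + g (u x) ^ 2 - 2 * (towards z x * (g (u x) * u' x)) := fun x => by
    linear_combination g (u x) ^ 2 * towards_sq z x
  simp_rw [hexp]
  rw [integral_sub hsquares hcross,
    integral_add h.memLp_deriv.integrable_sq hgu.integrable_sq, integral_const_mul,
    h.integral_towards_mul_comp_mul_deriv hg hG hG₀ hgu]
  ring

end IsSobolev

variable {p q μ ω c d : ℝ}

/-- The square of the logarithmic derivative `u' / u` along a soliton of frequency `ω`, as a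
function of its height `s`: it comes from the first integral `u' ^ 2 = ω * u ^ 2 - 2 / p * |u| ^ p`
of the soliton equation. -/
def radicand (p ω s : ℝ) : ℝ := ω - 2 / p * |s| ^ (p - 2)

/-- The slope `|u'|` of a positive soliton of frequency `ω` at height `s`, extended to an odd
function of `s`. -/
def solitonSlope (p ω s : ℝ) : ℝ := s * √(radicand p ω s)

/-- The primitive of `solitonSlope p ω` vanishing at `0`. -/
def slopePrimitive (p ω s : ℝ) : ℝ := ∫ r in 0..s, solitonSlope p ω r

lemma continuous_abs_rpow (hp : 2 < p) : Continuous fun s : ℝ => |s| ^ (p - 2) :=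
  continuous_abs.rpow_const fun _ => Or.inr (by linarith)

lemma continuous_radicand (hp : 2 < p) : Continuous (radicand p ω) :=
  continuous_const.sub (continuous_const.mul (continuous_abs_rpow hp))

lemma radicand_le (hp : 0 ≤ p) (s : ℝ) : radicand p ω s ≤ ω :=
  sub_le_self ω (by positivity)

lemma radicand_anti (hp : 2 ≤ p) {s t : ℝ} (hst : |s| ≤ |t|) :
    radicand p ω t ≤ radicand p ω s := by
  have := rpow_le_rpow (abs_nonneg s) hst (sub_nonneg.2 hp)
  unfold radicand
  gcongr

lemma continuous_solitonSlope (hp : 2 < p) : Continuous (solitonSlope p ω) :=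
  continuous_id.mul (continuous_radicand hp).sqrt

lemma solitonSlope_neg (s : ℝ) : solitonSlope p ω (-s) = -solitonSlope p ω s := by
  simp only [solitonSlope, radicand, abs_neg, neg_mul]

lemma abs_solitonSlope_le (hp : 0 ≤ p) (s : ℝ) : |solitonSlope p ω s| ≤ √ω * |s| := by
  rw [solitonSlope, abs_mul, abs_of_nonneg (sqrt_nonneg _), mul_comm]
  gcongr
  exact radicand_le hp s

lemma solitonSlope_sq (hp : p ≠ 0) {s : ℝ} (hs : 0 ≤ radicand p ω s) :
    solitonSlope p ω s ^ 2 = ω * s ^ 2 - 2 / p * |s| ^ p := by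
  have hpow : |s| ^ p = |s| ^ (p - 2) * s ^ 2 := by
    rcases eq_or_ne s 0 with rfl | hs₀
    · simp [hp]
    · rw [rpow_sub (abs_pos.2 hs₀), rpow_two, sq_abs, div_mul_cancel₀ _ (pow_ne_zero 2 hs₀)]
  rw [solitonSlope, mul_pow, sq_sqrt hs, radicand, hpow]
  ring

lemma hasDerivAt_slopePrimitive (hp : 2 < p) (s : ℝ) :
    HasDerivAt (slopePrimitive p ω) (solitonSlope p ω s) s :=
  (continuous_solitonSlope hp).integral_hasStrictDerivAt 0 s |>.hasDerivAt

lemma slopePrimitive_zero : slopePrimitive p ω 0 = 0 := intervalIntegral.integral_same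

lemma slopePrimitive_abs (s : ℝ) : slopePrimitive p ω |s| = slopePrimitive p ω s := by
  rcases abs_choice s with hs | hs <;> rw [hs]
  have hodd := intervalIntegral.integral_comp_neg (solitonSlope p ω) (a := 0) (b := s)
  simp only [solitonSlope_neg, intervalIntegral.integral_neg, neg_zero] at hodd
  rw [slopePrimitive, slopePrimitive, intervalIntegral.integral_symm, ← hodd, neg_neg]

/-- The frequency of the standing wave whose maximum, attained at the origin, is `d`: the point
nonlinearity forces the jump `2 * solitonSlope p ω d = d ^ (q - 1)` of the derivative there. -/
def frequency (p q d : ℝ) : ℝ := 2 / p * d ^ (p - 2) + d ^ (2 * q - 4) / 4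

/-- The lower bound for the energy `Ffun p q` among functions of mass `μ` and maximal modulus `d`,
given by completing the square at frequency `frequency p q d`. -/
def reducedEnergy (p q μ d : ℝ) : ℝ :=
  2 * slopePrimitive p (frequency p q d) d - frequency p q d * μ / 2 - d ^ q / q

lemma radicand_frequency (hd : 0 ≤ d) : radicand p (frequency p q d) d = d ^ (2 * q - 4) / 4 := by
  rw [radicand, frequency, abs_of_nonneg hd, add_sub_cancel_left]

namespace IsSobolev

lemma memLp_solitonSlope (h : IsSobolev u u') (hp : 2 < p) :
    MemLp (fun x => solitonSlope p ω (u x)) 2 :=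
  h.memLp.of_le_mul ((continuous_solitonSlope hp).comp h.continuous).aestronglyMeasurable
    (.of_forall fun x => abs_solitonSlope_le (by linarith) (u x))

lemma Ffun_eq_slopePrimitive (h : IsSobolev u u') (hp : 2 < p)
    (hω : ∀ x, 0 ≤ radicand p ω (u x)) (z : ℝ) :
    Ffun p q u u' = 2 * slopePrimitive p ω (u z) - ω * mass u / 2 - |u 0| ^ q / q +
      (∫ x, (u' x - towards z x * solitonSlope p ω (u x)) ^ 2) / 2 := by
  have hp₀ : p ≠ 0 := by positivity
  have hpow : ∀ x, |u x| ^ p = p / 2 * (ω * u x ^ 2 - solitonSlope p ω (u x) ^ 2) := fun x => by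
    rw [solitonSlope_sq hp₀ (hω x)]
    field_simp
    ring
  have hslope := h.memLp_solitonSlope (ω := ω) hp
  have hint : ∫ x, |u x| ^ p = p / 2 * (ω * mass u - ∫ x, solitonSlope p ω (u x) ^ 2) := by
    simp_rw [hpow]
    rw [integral_const_mul, integral_sub (h.memLp.integrable_sq.const_mul ω) hslope.integrable_sq,
      integral_const_mul, mass]
  have hsquare := h.integral_deriv_sq_add_integral_comp_sq (continuous_solitonSlope hp)
    (hasDerivAt_slopePrimitive hp) slopePrimitive_zero hslope z
  rw [Ffun, hint]
  field_simp
  linear_combination hsquare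

theorem Ffun_eq_reducedEnergy (h : IsSobolev u u') (hp : 2 < p) {z : ℝ}
    (hz : ∀ x, |u x| ≤ |u z|) :
    Ffun p q u u' = reducedEnergy p q (mass u) |u z| + (|u z| ^ q - |u 0| ^ q) / q +
      (∫ x, (u' x - towards z x * solitonSlope p (frequency p q |u z|) (u x)) ^ 2) / 2 := by
  have hω : ∀ x, 0 ≤ radicand p (frequency p q |u z|) (u x) := fun x => by
    refine le_trans ?_ (radicand_anti hp.le ((hz x).trans_eq (abs_abs _).symm))
    rw [radicand_frequency (abs_nonneg _)]
    positivity
  rw [h.Ffun_eq_slopePrimitive hp hω z, reducedEnergy, slopePrimitive_abs]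
  ring

end IsSobolev

/-! ### Uniqueness for the first-order equation -/

lemma hasDerivAt_solitonSlope {s : ℝ} (hs : 0 < s) (hω : 0 < radicand p ω s) :
    HasDerivAt (solitonSlope p ω)
      (√(radicand p ω s) - (p - 2) / p * |s| ^ (p - 2) / √(radicand p ω s)) s := by
  have hpow : HasDerivAt (fun s : ℝ => |s| ^ (p - 2)) ((p - 2) * |s| ^ (p - 2) / s) s := by
    have habs : HasDerivAt (fun s : ℝ => |s|) 1 s := by simpa [hs] using hasDerivAt_abs hs.ne'
    convert! habs.rpow_const (p := p - 2) (Or.inl (abs_pos.2 hs.ne').ne') using 1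
    rw [abs_of_pos hs, rpow_sub_one hs.ne']
    ring
  have hrad : HasDerivAt (radicand p ω) (-(2 / p * ((p - 2) * |s| ^ (p - 2) / s))) s :=
    (hpow.const_mul (2 / p)).const_sub ω
  refine ((hasDerivAt_id s).mul (hrad.sqrt hω.ne')).congr_deriv ?_
  have := sqrt_pos.2 hω
  simp only [id]
  field_simp
  ring

lemma exists_lipschitzOnWith_solitonSlope (hp : 2 < p) (hd : 0 < d) (hω : 0 < radicand p ω d) :
    ∃ K, LipschitzOnWith K (solitonSlope p ω) (Icc 0 d) := by
  have hrad : ∀ s ∈ Icc 0 d, 0 < radicand p ω s := fun s hs =>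
    hω.trans_le (radicand_anti hp.le (abs_le_abs_of_nonneg hs.1 hs.2))
  have hcont : ContinuousOn (fun s : ℝ => √(radicand p ω s) -
      (p - 2) / p * |s| ^ (p - 2) / √(radicand p ω s)) (Icc 0 d) :=
    (continuous_radicand hp).sqrt.continuousOn.sub <|
      (continuous_const.mul (continuous_abs_rpow hp)).continuousOn.div
        (continuous_radicand hp).sqrt.continuousOn fun s hs => (sqrt_pos.2 (hrad s hs)).ne'
  obtain ⟨K, hK⟩ := isCompact_Icc.exists_bound_of_continuousOn hcont
  refine ⟨K.toNNReal, ?_⟩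
  rw [← closure_Ioo hd.ne]
  refine ((convex_Ioo 0 d).lipschitzOnWith_of_nnnorm_hasDerivWithin_le (fun s hs =>
    (hasDerivAt_solitonSlope hs.1 (hrad s (Ioo_subset_Icc_self hs))).hasDerivWithinAt)
    fun s hs => ?_).closure (continuous_solitonSlope hp).continuousOn
  rw [← NNReal.coe_le_coe, coe_nnnorm]
  exact (hK s (Ioo_subset_Icc_self hs)).trans (le_coe_toNNReal K)

namespace IsSobolev

variable {g : ℝ → ℝ} {s : Set ℝ} {K : ℝ≥0}

lemma comp_neg (h : IsSobolev u u') : IsSobolev (fun x => u (-x)) (fun x => -u' (-x)) where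
  continuous := h.continuous.comp continuous_neg
  memLp := h.memLp.comp_measurePreserving (Measure.measurePreserving_neg volume)
  memLp_deriv := (h.memLp_deriv.comp_measurePreserving (Measure.measurePreserving_neg volume)).neg
  integral_eq_sub a b := by
    rw [intervalIntegral.integral_neg, intervalIntegral.integral_comp_neg, h.integral_eq_sub,
      neg_sub]

lemma hasDerivWithinAt_Ici (h : IsSobolev u u') (hg : Continuous g)
    (hu' : ∀ᵐ x, 0 < x → u' x = g (u x)) {x : ℝ} (hx : 0 ≤ x) :
    HasDerivWithinAt u (g (u x)) (Ici x) x := by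
  have heq : ∀ y ∈ Ici x, u y = u x + ∫ t in x..y, g (u t) := fun y hy => by
    rw [← sub_eq_iff_eq_add', ← h.integral_eq_sub]
    refine intervalIntegral.integral_congr_ae (hu'.mono fun t ht htxy => ht ?_)
    rw [uIoc_of_le hy] at htxy
    exact hx.trans_lt htxy.1
  have hprim : HasDerivAt (fun y => u x + ∫ t in x..y, g (u t)) (g (u x)) x :=
    ((hg.comp h.continuous).integral_hasStrictDerivAt x x).hasDerivAt.const_add (u x)
  exact hprim.hasDerivWithinAt.congr heq (heq x self_mem_Ici)

lemma eqOn_Ici_of_ae_deriv_eq (hu : IsSobolev u u') (hv : IsSobolev v v') (hg : Continuous g)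
    (hlip : LipschitzOnWith K g s) (hus : ∀ x, u x ∈ s) (hvs : ∀ x, v x ∈ s)
    (hu' : ∀ᵐ x, 0 < x → u' x = g (u x)) (hv' : ∀ᵐ x, 0 < x → v' x = g (v x))
    (h₀ : u 0 = v 0) : EqOn u v (Ici 0) := fun _ hx =>
  ODE_solution_unique_of_mem_Icc_right (v := fun _ => g) (s := fun _ => s) (fun _ _ => hlip)
    hu.continuous.continuousOn (fun _ ht => hu.hasDerivWithinAt_Ici hg hu' ht.1)
    (fun t _ => hus t) hv.continuous.continuousOn
    (fun _ ht => hv.hasDerivWithinAt_Ici hg hv' ht.1) (fun t _ => hvs t) h₀ ⟨hx, le_rfl⟩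

lemma eq_of_ae_deriv_eq_towards_mul (hu : IsSobolev u u') (hv : IsSobolev v v')
    (hg : Continuous g) (hlip : LipschitzOnWith K g s) (hus : ∀ x, u x ∈ s) (hvs : ∀ x, v x ∈ s)
    (hu' : ∀ᵐ x, u' x = towards 0 x * g (u x)) (hv' : ∀ᵐ x, v' x = towards 0 x * g (v x))
    (h₀ : u 0 = v 0) : u = v := by
  have hright {w w' : ℝ → ℝ} (hw : ∀ᵐ x, w' x = towards 0 x * g (w x)) :
      ∀ᵐ x, 0 < x → w' x = -g (w x) :=
    hw.mono fun x hx hx₀ => by rw [hx, towards, if_neg hx₀.not_ge, neg_one_mul]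
  have hleft {w w' : ℝ → ℝ} (hw : ∀ᵐ x, w' x = towards 0 x * g (w x)) :
      ∀ᵐ x, 0 < x → -w' (-x) = -g (w (-x)) :=
    ((Measure.measurePreserving_neg volume).quasiMeasurePreserving.ae hw).mono fun _ hx hx₀ => by
      rw [hx, towards, if_pos (neg_nonpos.2 hx₀.le), one_mul]
  ext x
  rcases le_total 0 x with hx | hx
  · exact eqOn_Ici_of_ae_deriv_eq hu hv hg.neg hlip.neg hus hvs (hright hu') (hright hv') h₀ hx
  · simpa using eqOn_Ici_of_ae_deriv_eq hu.comp_neg hv.comp_neg hg.neg hlip.neg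
      (fun _ => hus _) (fun _ => hvs _) (hleft hu') (hleft hv') (by simpa) (neg_nonneg.2 hx)

end IsSobolev

/-! ### Solitons and standing waves -/

/-- The soliton of frequency `ω`: the positive even solution of
`u' ^ 2 = ω * u ^ 2 - 2 / p * |u| ^ p` on the line. -/
def soliton (p ω x : ℝ) : ℝ :=
  (p * ω / 2 * (cosh ((p - 2) / 2 * √ω * x) ^ 2)⁻¹) ^ (1 / (p - 2))

lemma soliton_pos (hp : 0 < p) (hω : 0 < ω) (x : ℝ) : 0 < soliton p ω x := by
  have := cosh_pos ((p - 2) / 2 * √ω * x)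
  unfold soliton
  positivity

lemma soliton_rpow (hp : 2 < p) (hω : 0 < ω) (x : ℝ) :
    soliton p ω x ^ (p - 2) = p * ω / 2 * (cosh ((p - 2) / 2 * √ω * x) ^ 2)⁻¹ := by
  rw [soliton, ← rpow_mul (by positivity), one_div_mul_cancel (by linarith), rpow_one]

lemma radicand_soliton (hp : 2 < p) (hω : 0 < ω) (x : ℝ) :
    radicand p ω (soliton p ω x) = ω * tanh ((p - 2) / 2 * √ω * x) ^ 2 := by
  have := cosh_pos ((p - 2) / 2 * √ω * x)
  rw [radicand, abs_of_pos (soliton_pos (by linarith) hω x), soliton_rpow hp hω,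
    tanh_eq_sinh_div_cosh, div_pow, sinh_sq]
  field_simp

lemma radicand_soliton_pos (hp : 2 < p) (hω : 0 < ω) {x : ℝ} (hx : x ≠ 0) :
    0 < radicand p ω (soliton p ω x) := by
  have hk : (p - 2) / 2 * √ω * x ≠ 0 :=
    mul_ne_zero (mul_pos (by linarith) (sqrt_pos.2 hω)).ne' hx
  have : tanh ((p - 2) / 2 * √ω * x) ≠ 0 := by
    rw [tanh_eq_sinh_div_cosh]
    exact div_ne_zero (sinh_ne_zero.2 hk) (cosh_pos _).ne'
  rw [radicand_soliton hp hω]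
  positivity

lemma solitonSlope_soliton (hp : 2 < p) (hω : 0 < ω) {x : ℝ} (hx : 0 ≤ x) :
    solitonSlope p ω (soliton p ω x) = soliton p ω x * (√ω * tanh ((p - 2) / 2 * √ω * x)) := by
  have htanh : 0 ≤ tanh ((p - 2) / 2 * √ω * x) := by
    rw [tanh_eq_sinh_div_cosh]
    have := sub_pos.2 hp
    exact div_nonneg (sinh_nonneg_iff.2 (by positivity)) (cosh_pos _).le
  rw [solitonSlope, radicand_soliton hp hω, sqrt_mul hω.le, sqrt_sq htanh]

lemma hasDerivAt_soliton (hp : 2 < p) (hω : 0 < ω) {x : ℝ} (hx : 0 ≤ x) :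
    HasDerivAt (soliton p ω) (-solitonSlope p ω (soliton p ω x)) x := by
  have hcosh := cosh_pos ((p - 2) / 2 * √ω * x)
  have hp' := sub_pos.2 hp
  have hbase : 0 < p * ω / 2 * (cosh ((p - 2) / 2 * √ω * x) ^ 2)⁻¹ := by positivity
  have harg : HasDerivAt (fun x => (p - 2) / 2 * √ω * x) ((p - 2) / 2 * √ω) x := by
    simpa using (hasDerivAt_id x).const_mul ((p - 2) / 2 * √ω)
  have hderiv := (((harg.cosh.pow 2).inv (pow_ne_zero 2 hcosh.ne')).const_mul
    (p * ω / 2)).rpow_const (p := 1 / (p - 2)) (Or.inl hbase.ne')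
  refine hderiv.congr_deriv ?_
  rw [solitonSlope_soliton hp hω hx, soliton, tanh_eq_sinh_div_cosh]
  simp only [Pi.pow_apply, Pi.inv_apply]
  rw [rpow_sub_one hbase.ne']
  norm_num
  field_simp

lemma antitoneOn_soliton (hp : 2 < p) (hω : 0 < ω) : AntitoneOn (soliton p ω) (Ici 0) :=
  antitoneOn_of_deriv_nonpos (convex_Ici 0)
    (fun x hx => (hasDerivAt_soliton hp hω hx).continuousAt.continuousWithinAt)
    (fun x hx =>
      (hasDerivAt_soliton hp hω (interior_subset hx)).differentiableAt.differentiableWithinAt)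
    fun x hx => by
      rw [(hasDerivAt_soliton hp hω (interior_subset hx)).deriv]
      exact neg_nonpos.2 (mul_nonneg (soliton_pos (by linarith) hω x).le (sqrt_nonneg _))

lemma tendsto_soliton_atTop (hp : 2 < p) (hω : 0 < ω) :
    Tendsto (soliton p ω) atTop (𝓝 0) := by
  have hk : 0 < (p - 2) / 2 * √ω := mul_pos (by linarith) (sqrt_pos.2 hω)
  have hexp : 0 < 1 / (p - 2) := one_div_pos.2 (by linarith)
  have hcosh : Tendsto (fun x => cosh ((p - 2) / 2 * √ω * x)) atTop atTop :=
    (tendsto_atTop_mono (fun x => (sinh_lt_cosh x).le) sinhOrderIso.tendsto_atTop).comp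
      (tendsto_id.const_mul_atTop hk)
  have hbase := (((tendsto_pow_atTop two_ne_zero).comp hcosh).inv_tendsto_atTop).const_mul
    (p * ω / 2)
  rw [← zero_rpow hexp.ne', ← mul_zero (p * ω / 2)]
  exact hbase.rpow_const (Or.inr hexp.le)

lemma exists_soliton_eq (hp : 2 < p) (hω : 0 < ω) (hd : 0 < d) (hrad : 0 < radicand p ω d) :
    ∃ y, 0 < y ∧ soliton p ω y = d := by
  have hp' := sub_pos.2 hp
  have hd₀ : d < soliton p ω 0 := by
    rw [radicand, abs_of_pos hd, sub_pos, ← lt_div_iff₀' (by positivity)] at hrad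
    refine (rpow_lt_rpow_iff hd.le (soliton_pos (by linarith) hω 0).le hp').1 ?_
    rw [soliton_rpow hp hω]
    rwa [mul_zero, cosh_zero, one_pow, inv_one, mul_one, mul_comm p ω, ← div_div_eq_mul_div]
  obtain ⟨x, hxd, hx⟩ := (((tendsto_soliton_atTop hp hω).eventually_le_const hd).and
    (eventually_ge_atTop 0)).exists
  obtain ⟨y, hy, rfl⟩ := intermediate_value_Icc' hx
    (fun t ht => (hasDerivAt_soliton hp hω ht.1).continuousAt.continuousWithinAt) ⟨hxd, hd₀.le⟩
  exact ⟨y, hy.1.lt_of_ne (by rintro rfl; exact hd₀.false), rfl⟩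

/-- The mass of a half-line of soliton of frequency `ω` below height `s`, the height being used as
the variable of integration. -/
def massPrimitive (p ω s : ℝ) : ℝ := ∫ r in 0..s, r / √(radicand p ω r)

lemma hasDerivAt_massPrimitive (hp : 2 < p) {s : ℝ} (hs : 0 < radicand p ω s) :
    HasDerivAt (massPrimitive p ω) (s / √(radicand p ω s)) s := by
  have hrad : ∀ r ∈ uIcc 0 s, 0 < radicand p ω r := fun r hr => by
    refine hs.trans_le (radicand_anti hp.le ?_)
    simpa using abs_sub_left_of_mem_uIcc hr
  have hcont : ∀ r, 0 < radicand p ω r → ContinuousAt (fun r => r / √(radicand p ω r)) r :=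
    fun r hr => continuousAt_id.div (continuous_radicand hp).sqrt.continuousAt (sqrt_pos.2 hr).ne'
  refine intervalIntegral.integral_hasDerivAt_right
    (ContinuousOn.intervalIntegrable fun r hr => (hcont r (hrad r hr)).continuousWithinAt)
    ?_ (hcont s hs)
  exact ((measurable_id.div (continuous_radicand hp).sqrt.measurable).stronglyMeasurable
    |>.stronglyMeasurableAtFilter)

lemma integrableOn_and_integral_soliton_add_sq (hp : 2 < p) (hω : 0 < ω) {y : ℝ} (hy : 0 < y) :
    IntegrableOn (fun x => soliton p ω (x + y) ^ 2) (Ioi 0) ∧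
      ∫ x in Ioi 0, soliton p ω (x + y) ^ 2 = massPrimitive p ω (soliton p ω y) := by
  have hderiv : ∀ x ∈ Ici 0, HasDerivAt (fun x => -massPrimitive p ω (soliton p ω (x + y)))
      (soliton p ω (x + y) ^ 2) x := fun x hx => by
    have hxy : 0 < x + y := add_pos_of_nonneg_of_pos hx hy
    have hrad := radicand_soliton_pos hp hω hxy.ne'
    have := sqrt_pos.2 hrad
    refine (((hasDerivAt_massPrimitive hp hrad).comp x
      ((hasDerivAt_soliton hp hω hxy.le).comp_add_const x y)).neg).congr_deriv ?_
    rw [solitonSlope]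
    field_simp
  have hlim : Tendsto (fun x => -massPrimitive p ω (soliton p ω (x + y))) atTop (𝓝 0) := by
    have hcont : ContinuousAt (massPrimitive p ω) 0 :=
      (hasDerivAt_massPrimitive hp (by simp [radicand, (sub_pos.2 hp).ne', hω])).continuousAt
    have := (hcont.tendsto.comp ((tendsto_soliton_atTop hp hω).comp
      (tendsto_atTop_add_const_right _ y tendsto_id))).neg
    simpa [massPrimitive] using this
  refine ⟨integrableOn_Ioi_deriv_of_nonneg' hderiv (fun x _ => sq_nonneg _) hlim, ?_⟩
  rw [integral_Ioi_of_hasDerivAt_of_nonneg' hderiv (fun x _ => sq_nonneg _) hlim]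
  simp

lemma integrable_comp_abs {f : ℝ → ℝ} (hf : IntegrableOn f (Ioi 0)) :
    Integrable fun x => f |x| := by
  have hright : IntegrableOn (fun x => f |x|) (Ici 0) :=
    (Iff.mpr integrableOn_Ici_iff_integrableOn_Ioi hf).congr_fun
      (fun x hx => by rw [abs_of_nonneg hx]) measurableSet_Ici
  have hleft : IntegrableOn (fun x => f |x|) (Iic 0) := by
    have hneg := (Measure.measurePreserving_neg volume).integrableOn_comp_preimage
      (Homeomorph.neg ℝ).measurableEmbedding (f := fun x => f |x|) (s := Ici 0)
    simpa [Function.comp_def] using hneg.2 hright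
  rw [← integrableOn_univ, ← Iic_union_Ici (a := (0 : ℝ))]
  exact hleft.union hright

/-- The standing wave of frequency `ω`, obtained by gluing at the origin two mirror images of the
tail `Ici y` of the soliton. -/
def gluedSoliton (p ω y x : ℝ) : ℝ := soliton p ω (|x| + y)

/-- The weak derivative of `gluedSoliton p ω y`. -/
def gluedSolitonDeriv (p ω y x : ℝ) : ℝ :=
  towards 0 x * solitonSlope p ω (gluedSoliton p ω y x)

section GluedSoliton

variable {y : ℝ}

lemma gluedSoliton_pos (hp : 0 < p) (hω : 0 < ω) (x : ℝ) : 0 < gluedSoliton p ω y x :=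
  soliton_pos hp hω _

lemma gluedSoliton_zero : gluedSoliton p ω y 0 = soliton p ω y := by
  rw [gluedSoliton, abs_zero, zero_add]

lemma gluedSoliton_le (hp : 2 < p) (hω : 0 < ω) (hy : 0 ≤ y) (x : ℝ) :
    gluedSoliton p ω y x ≤ soliton p ω y :=
  antitoneOn_soliton hp hω hy (add_nonneg (abs_nonneg x) hy)
    (le_add_of_nonneg_left (abs_nonneg x))

lemma continuous_gluedSoliton (hp : 2 < p) (hω : 0 < ω) (hy : 0 ≤ y) :
    Continuous (gluedSoliton p ω y) :=
  continuous_iff_continuousAt.2 fun x =>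
    (hasDerivAt_soliton hp hω (add_nonneg (abs_nonneg x) hy)).continuousAt.comp
      (f := fun x => |x| + y) (by fun_prop)

lemma hasDerivAt_gluedSoliton (hp : 2 < p) (hω : 0 < ω) (hy : 0 ≤ y) {x : ℝ} (hx : x ≠ 0) :
    HasDerivAt (gluedSoliton p ω y) (gluedSolitonDeriv p ω y x) x := by
  refine ((hasDerivAt_soliton hp hω (add_nonneg (abs_nonneg x) hy)).comp x
    ((hasDerivAt_abs hx).add_const y)).congr_deriv ?_
  rcases hx.lt_or_gt with hx | hx
  · simp [gluedSolitonDeriv, gluedSoliton, towards, hx, hx.le]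
  · simp [gluedSolitonDeriv, gluedSoliton, towards, hx]

lemma integrable_gluedSoliton_sq (hp : 2 < p) (hω : 0 < ω) (hy : 0 < y) :
    Integrable fun x => gluedSoliton p ω y x ^ 2 :=
  integrable_comp_abs (integrableOn_and_integral_soliton_add_sq hp hω hy).1

theorem isSobolev_gluedSoliton (hp : 2 < p) (hω : 0 < ω) (hy : 0 < y) :
    IsSobolev (gluedSoliton p ω y) (gluedSolitonDeriv p ω y) := by
  have hcont := continuous_gluedSoliton hp hω hy.le
  have hmem : MemLp (gluedSoliton p ω y) 2 :=
    (memLp_two_iff_integrable_sq hcont.aestronglyMeasurable).2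
      (integrable_gluedSoliton_sq hp hω hy)
  have hmem' : MemLp (gluedSolitonDeriv p ω y) 2 :=
    memLp_towards_mul (hmem.of_le_mul ((continuous_solitonSlope hp).comp hcont).aestronglyMeasurable
      (.of_forall fun x => abs_solitonSlope_le (by linarith) _)) 0
  refine ⟨hcont, hmem, hmem', fun a b => ?_⟩
  exact integral_eq_of_hasDerivAt_off_countable _ _ (countable_singleton 0) hcont.continuousOn
    (fun x hx => hasDerivAt_gluedSoliton hp hω hy.le hx.2)
    (IntegrableOn.intervalIntegrable <|
      LocallyIntegrable.integrableOn_isCompact (hmem'.locallyIntegrable one_le_two) isCompact_uIcc)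

lemma mass_gluedSoliton (hp : 2 < p) (hω : 0 < ω) (hy : 0 < y) :
    mass (gluedSoliton p ω y) = 2 * massPrimitive p ω (soliton p ω y) := by
  rw [mass, ← (integrableOn_and_integral_soliton_add_sq hp hω hy).2]
  exact integral_comp_abs (f := fun x => soliton p ω (x + y) ^ 2)

end GluedSoliton

lemma frequency_pos (hp : 0 < p) (hd : 0 < d) : 0 < frequency p q d := by
  unfold frequency
  positivity

/-- Half the mass of the standing wave whose maximum, attained at the origin, is `d`. -/
def halfMass (p q d : ℝ) : ℝ := massPrimitive p (frequency p q d) d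

theorem exists_isSobolev_Ffun_eq_reducedEnergy (hp : 2 < p) (hd : 0 < d) :
    ∃ u u', IsSobolev u u' ∧ mass u = 2 * halfMass p q d ∧
      Ffun p q u u' = reducedEnergy p q (mass u) d := by
  have hp₀ : 0 < p := by linarith
  have hω := frequency_pos (q := q) hp₀ hd
  obtain ⟨y, hy, hyd⟩ := exists_soliton_eq hp hω hd (by rw [radicand_frequency hd.le]; positivity)
  have hu := isSobolev_gluedSoliton hp hω hy
  have hmax : |gluedSoliton p (frequency p q d) y 0| = d := by
    rw [gluedSoliton_zero, hyd, abs_of_pos hd]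
  refine ⟨_, _, hu, ?_, ?_⟩
  · rw [mass_gluedSoliton hp hω hy, hyd, halfMass]
  · rw [hu.Ffun_eq_reducedEnergy hp (z := 0) fun x => ?_, hmax]
    · simp [gluedSolitonDeriv]
    · rw [hmax, abs_of_pos (gluedSoliton_pos hp₀ hω x)]
      exact (gluedSoliton_le hp hω hy.le x).trans_eq hyd

/-! ### The reduced energy -/

lemma hasDerivAt_diag {F f : ℝ → ℝ → ℝ} {x F' : ℝ} (hF₁ : HasDerivAt (fun y => F y x) F' x)
    (hF₂ : ∀ y s, HasDerivAt (F y) (f y s) s) (hf : ContinuousAt (Function.uncurry f) (x, x)) :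
    HasDerivAt (fun y => F y y) (F' + f x x) x := by
  have hincr : (fun y => F y y - F y x - f x x * (y - x)) =o[𝓝 x] fun y => y - x := by
    refine Asymptotics.isLittleO_iff.2 fun ε hε => ?_
    obtain ⟨δ, hδ, hball⟩ := Metric.continuousAt_iff.1 hf ε hε
    filter_upwards [Metric.ball_mem_nhds x hδ] with y hy
    have hderiv : ∀ s ∈ Metric.ball x δ,
        HasDerivWithinAt (fun s => F y s - f x x * s) (f y s - f x x) (Metric.ball x δ) s :=
      fun s _ => ((hF₂ y s).sub (hasDerivAt_const_mul (f x x))).hasDerivWithinAt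
    have hbound : ∀ s ∈ Metric.ball x δ, ‖f y s - f x x‖ ≤ ε := fun s hs =>
      (hball (x := (y, s)) (max_lt hy hs)).le
    have hmvt := (convex_ball x δ).norm_image_sub_le_of_norm_hasDerivWithin_le hderiv hbound
      (Metric.mem_ball_self hδ) hy
    rwa [sub_sub_sub_comm, ← mul_sub] at hmvt
  refine .of_isLittleO ((hF₁.isLittleO.add hincr).congr_left fun y => ?_)
  simp only [smul_eq_mul]
  ring

lemma hasDerivAt_slopePrimitive_frequency (hp : 2 < p) {s : ℝ} (hs : 0 < radicand p ω s) :
    HasDerivAt (fun ω => slopePrimitive p ω s) (massPrimitive p ω s / 2) ω := by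
  set δ := radicand p ω s / 2 with hδ
  have hlow : ∀ r ∈ uIoc 0 s, ∀ w ∈ Ioi (ω - δ), δ ≤ radicand p w r := fun r hr w hw => by
    have hrs : |r| ≤ |s| := by simpa using abs_sub_left_of_mem_uIcc (uIoc_subset_uIcc hr)
    have := radicand_anti (ω := ω) hp.le hrs
    have := mem_Ioi.1 hw
    simp only [radicand] at *
    linarith
  have hderiv : ∀ r ∈ uIoc 0 s, ∀ w ∈ Ioi (ω - δ),
      HasDerivAt (fun w => solitonSlope p w r) (r / √(radicand p w r) / 2) w := fun r hr w hw => by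
    have hpos : 0 < radicand p w r := (half_pos hs).trans_le (hlow r hr w hw)
    refine ((((hasDerivAt_id w).sub_const _).sqrt hpos.ne').const_mul r).congr_deriv ?_
    rw [id, ← radicand]
    ring
  have hbound : ∀ r ∈ uIoc 0 s, ∀ w ∈ Ioi (ω - δ),
      ‖r / √(radicand p w r) / 2‖ ≤ |s| / √δ / 2 := fun r hr w hw => by
    have hrs : |r| ≤ |s| := by simpa using abs_sub_left_of_mem_uIcc (uIoc_subset_uIcc hr)
    have := sqrt_pos.2 (half_pos hs)
    have := sqrt_le_sqrt (hlow r hr w hw)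
    rw [norm_eq_abs, abs_div, abs_div, abs_two, abs_of_nonneg (sqrt_nonneg _)]
    gcongr
  rw [massPrimitive, ← intervalIntegral.integral_div]
  refine (intervalIntegral.hasDerivAt_integral_of_dominated_loc_of_deriv_le
    (F := solitonSlope p) (Ioi_mem_nhds (sub_lt_self ω (half_pos hs)))
    (.of_forall fun w => (continuous_solitonSlope hp).aestronglyMeasurable)
    ((continuous_solitonSlope hp).intervalIntegrable 0 s)
    ?_ (.of_forall hbound) intervalIntegrable_const (.of_forall hderiv)).2
  exact ((measurable_id.div (continuous_radicand hp).sqrt.measurable).div_const 2)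
    |>.aestronglyMeasurable

lemma continuous_frequency (hp : 2 ≤ p) (hq : 2 ≤ q) : Continuous (frequency p q) :=
  .add (continuous_const.mul (continuous_id.rpow_const fun _ => Or.inr (by linarith)))
    (.div_const (continuous_id.rpow_const fun _ => Or.inr (by linarith)) 4)

lemma exists_hasDerivAt_frequency (hp : 2 < p) (hq : 2 ≤ q) (hd : 0 < d) :
    ∃ ω' > 0, HasDerivAt (frequency p q) ω' d := by
  have := sub_pos.2 hp
  have hq' : 0 ≤ 2 * q - 4 := by linarith
  exact ⟨_, by positivity, ((hasDerivAt_rpow_const (Or.inl hd.ne')).const_mul (2 / p)).add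
    ((hasDerivAt_rpow_const (Or.inl hd.ne')).div_const 4)⟩

lemma continuous_uncurry_solitonSlope (hp : 2 < p) (hq : 2 ≤ q) :
    Continuous (Function.uncurry fun d => solitonSlope p (frequency p q d)) :=
  continuous_snd.mul (((continuous_frequency hp.le hq).comp continuous_fst).sub
    (continuous_const.mul ((continuous_abs_rpow hp).comp continuous_snd))).sqrt

lemma continuous_reducedEnergy (hp : 2 < p) (hq : 2 ≤ q) : Continuous (reducedEnergy p q μ) := by
  have hslope : Continuous fun d => slopePrimitive p (frequency p q d) d :=
    intervalIntegral.continuous_parametric_intervalIntegral_of_continuous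
      (continuous_uncurry_solitonSlope hp hq) continuous_id
  have hpow : Continuous fun d : ℝ => d ^ q :=
    continuous_id.rpow_const fun _ => Or.inr (by linarith)
  exact ((hslope.const_mul 2).sub
    (((continuous_frequency hp.le hq).mul_const μ).div_const 2)).sub (hpow.div_const q)

lemma reducedEnergy_zero (hp : 2 < p) (hq : 2 < q) : reducedEnergy p q μ 0 = 0 := by
  have hp' : p - 2 ≠ 0 := by linarith
  have hq' : 2 * q - 4 ≠ 0 := by linarith
  have hq₀ : q ≠ 0 := by linarith
  simp [reducedEnergy, slopePrimitive_zero, frequency, zero_rpow, hp', hq', hq₀]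

-- Envelope formula: `d` is a critical height of the energy at frequency `frequency p q d`, so only
-- the derivative in the frequency survives.
theorem hasDerivAt_reducedEnergy (hp : 2 < p) (hq : 2 ≤ q) (hd : 0 < d) {ω' : ℝ}
    (hω' : HasDerivAt (frequency p q) ω' d) :
    HasDerivAt (reducedEnergy p q μ) (ω' * (halfMass p q d - μ / 2)) d := by
  have hrad : 0 < radicand p (frequency p q d) d := by
    rw [radicand_frequency hd.le]
    positivity
  have hfreq : HasDerivAt (fun x => slopePrimitive p (frequency p q x) d)
      (halfMass p q d / 2 * ω') d :=
    (hasDerivAt_slopePrimitive_frequency hp hrad).comp d hω'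
  have hslope := hasDerivAt_diag (F := fun x => slopePrimitive p (frequency p q x)) hfreq
    (fun x => hasDerivAt_slopePrimitive hp)
    (continuous_uncurry_solitonSlope hp hq).continuousAt
  have hboundary : 2 * solitonSlope p (frequency p q d) d = d ^ (q - 1) := by
    have hsq : d ^ (2 * q - 4) / 4 = (d ^ (q - 2) / 2) ^ 2 := by
      rw [div_pow, ← rpow_mul_natCast hd.le]
      norm_num
      ring_nf
    rw [solitonSlope, radicand_frequency hd.le, hsq, sqrt_sq (by positivity),
      show q - 1 = 1 + (q - 2) by ring, rpow_one_add' hd.le (by linarith)]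
    ring
  refine (((hslope.const_mul 2).sub ((hω'.mul_const μ).div_const 2)).sub
    ((hasDerivAt_rpow_const (Or.inl hd.ne')).div_const q)).congr_deriv ?_
  rw [mul_div_cancel_left₀ _ (by linarith : q ≠ 0)]
  linear_combination hboundary

/-! ### The half-mass -/

/-- `radicand p (frequency p q d)` at height `d * t`, divided by `d ^ 4`. In this scaling the
half-mass is an integral over a fixed interval, with an integrand monotone in `d`. -/
def scaledRadicand (p q d t : ℝ) : ℝ :=
  d ^ (2 * q - 8) / 4 + 2 / p * d ^ (p - 6) * (1 - t ^ (p - 2))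

lemma rpow_div_four_le_scaledRadicand (hp : 2 ≤ p) (hd : 0 ≤ d) {t : ℝ} (ht : t ∈ Icc 0 1) :
    d ^ (2 * q - 8) / 4 ≤ scaledRadicand p q d t := by
  have := sub_nonneg.2 (rpow_le_one ht.1 ht.2 (sub_nonneg.2 hp))
  exact le_add_of_nonneg_right (by positivity)

lemma scaledRadicand_le (hp : 0 ≤ p) (hd : 0 ≤ d) {t : ℝ} (ht : 0 ≤ t) :
    scaledRadicand p q d t ≤ d ^ (2 * q - 8) / 4 + 2 / p * d ^ (p - 6) :=
  add_le_add le_rfl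
    (mul_le_of_le_one_right (by positivity) (sub_le_self 1 (rpow_nonneg ht _)))

lemma scaledRadicand_pos (hp : 2 ≤ p) (hd : 0 < d) {t : ℝ} (ht : t ∈ Icc 0 1) :
    0 < scaledRadicand p q d t :=
  (by positivity : 0 < d ^ (2 * q - 8) / 4).trans_le (rpow_div_four_le_scaledRadicand hp hd.le ht)

lemma scaledRadicand_strictAntiOn (hp : 2 < p) (hp' : p < 6) (hq : q ≤ 4) {t : ℝ}
    (ht : t ∈ Ico 0 1) : StrictAntiOn (fun d => scaledRadicand p q d t) (Ioi 0) := by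
  intro d hd e _ hde
  have := sub_pos.2 (rpow_lt_one ht.1 ht.2 (sub_pos.2 hp))
  have hle := rpow_le_rpow_of_nonpos hd hde.le (by linarith : 2 * q - 8 ≤ 0)
  have hlt := rpow_lt_rpow_of_neg hd hde (sub_neg.2 hp')
  simp only [scaledRadicand]
  exact add_lt_add_of_le_of_lt (by gcongr) (by gcongr)

lemma continuous_scaledRadicand (hp : 2 ≤ p) : Continuous (scaledRadicand p q d) :=
  continuous_const.add (continuous_const.mul (continuous_const.sub
    (continuous_id.rpow_const fun _ => Or.inr (sub_nonneg.2 hp))))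

lemma continuousOn_div_sqrt_scaledRadicand (hp : 2 ≤ p) (hd : 0 < d) :
    ContinuousOn (fun t => t / √(scaledRadicand p q d t)) (Icc 0 1) :=
  continuousOn_id.div (continuous_scaledRadicand hp).sqrt.continuousOn fun _ ht =>
    (sqrt_pos.2 (scaledRadicand_pos hp hd ht)).ne'

lemma div_sqrt_scaledRadicand_le (hp : 2 ≤ p) (hd : 0 < d) {t : ℝ} (ht : t ∈ Icc 0 1) :
    t / √(scaledRadicand p q d t) ≤ 2 * d ^ (4 - q) := by
  have hlow : d ^ (q - 4) / 2 ≤ √(scaledRadicand p q d t) := by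
    refine le_sqrt_of_sq_le (le_of_eq_of_le ?_ (rpow_div_four_le_scaledRadicand hp hd.le ht))
    rw [div_pow, ← rpow_mul_natCast hd.le]
    norm_num
    ring_nf
  calc t / √(scaledRadicand p q d t) ≤ 1 / (d ^ (q - 4) / 2) := by gcongr; exact ht.2
    _ = 2 * d ^ (4 - q) := by
      rw [one_div_div, div_eq_mul_inv, ← rpow_neg hd.le, neg_sub]

lemma halfMass_eq_integral (hp : 2 ≤ p) (hd : 0 < d) :
    halfMass p q d = ∫ t in 0..1, t / √(scaledRadicand p q d t) := by
  have hscale := intervalIntegral.smul_integral_comp_mul_left (a := 0) (b := 1)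
    (fun s => s / √(radicand p (frequency p q d) s)) d
  rw [mul_zero, mul_one] at hscale
  rw [halfMass, massPrimitive, ← hscale, smul_eq_mul, ← intervalIntegral.integral_const_mul]
  refine intervalIntegral.integral_congr fun t ht => ?_
  rw [uIcc_of_le zero_le_one] at ht
  have hrad : radicand p (frequency p q d) (d * t) = (d ^ 2) ^ 2 * scaledRadicand p q d t := by
    have h₁ : d ^ (2 * q - 4) = d ^ 4 * d ^ (2 * q - 8) := by
      rw [← rpow_natCast, ← rpow_add hd]
      norm_num
      ring_nf
    have h₂ : d ^ (p - 2) = d ^ 4 * d ^ (p - 6) := by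
      rw [← rpow_natCast, ← rpow_add hd]
      norm_num
      ring_nf
    rw [radicand, frequency, scaledRadicand, abs_of_nonneg (mul_nonneg hd.le ht.1),
      mul_rpow hd.le ht.1, h₁, h₂]
    ring
  have := sqrt_pos.2 (scaledRadicand_pos (q := q) hp hd ht)
  simp only [hrad]
  rw [sqrt_mul (sq_nonneg _), sqrt_sq (sq_nonneg d)]
  field_simp

theorem strictMonoOn_halfMass (hp : 2 < p) (hp' : p < 6) (hq : q ≤ 4) :
    StrictMonoOn (halfMass p q) (Ioi 0) := by
  intro d hd e he hde
  have hlt : ∀ t ∈ Ioo (0 : ℝ) 1,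
      t / √(scaledRadicand p q d t) < t / √(scaledRadicand p q e t) := fun t ht => by
    have hanti := scaledRadicand_strictAntiOn hp hp' hq (Ioo_subset_Ico_self ht) hd he hde
    have hpos := scaledRadicand_pos (q := q) hp.le he (Ioo_subset_Icc_self ht)
    have := ht.1
    have := sqrt_pos.2 hpos
    gcongr
  rw [halfMass_eq_integral hp.le hd, halfMass_eq_integral hp.le he]
  refine intervalIntegral.integral_lt_integral_of_continuousOn_of_le_of_exists_lt zero_lt_one
    (continuousOn_div_sqrt_scaledRadicand hp.le hd) (continuousOn_div_sqrt_scaledRadicand hp.le he)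
    (fun t ht => ?_) ⟨1 / 2, by norm_num, hlt _ (by norm_num)⟩
  rcases ht.2.lt_or_eq with ht₁ | rfl
  · exact (hlt t ⟨ht.1, ht₁⟩).le
  · have := rpow_le_rpow_of_nonpos hd hde.le (by linarith : 2 * q - 8 ≤ 0)
    have : 0 < e ^ (2 * q - 8) := rpow_pos_of_pos he _
    simp only [scaledRadicand, one_rpow, sub_self, mul_zero, add_zero]
    gcongr

lemma tendsto_halfMass {l : Filter ℝ} [l.IsCountablyGenerated] (hp : 2 ≤ p) {f : ℝ → ℝ}
    {C : ℝ} (hl : ∀ᶠ d in l, 0 < d ∧ d ^ (4 - q) ≤ C)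
    (hf : ∀ t ∈ Ioo (0 : ℝ) 1, Tendsto (fun d => t / √(scaledRadicand p q d t)) l (𝓝 (f t))) :
    Tendsto (halfMass p q) l (𝓝 (∫ t in 0..1, f t)) := by
  have hIcc {t : ℝ} (ht : t ∈ uIoc 0 1) : t ∈ Icc (0 : ℝ) 1 := by
    rw [uIoc_of_le zero_le_one] at ht
    exact Ioc_subset_Icc_self ht
  refine Tendsto.congr' (hl.mono fun d hd => (halfMass_eq_integral hp hd.1).symm) ?_
  refine intervalIntegral.tendsto_integral_filter_of_dominated_convergence (fun _ => 2 * C)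
    (.of_forall fun d => ?_) (hl.mono fun d hd => .of_forall fun t ht => ?_)
    intervalIntegrable_const ?_
  · exact (measurable_id.div (continuous_scaledRadicand hp).sqrt.measurable).aestronglyMeasurable
  · rw [norm_eq_abs, abs_of_nonneg (div_nonneg (hIcc ht).1 (sqrt_nonneg _))]
    exact (div_sqrt_scaledRadicand_le hp hd.1 (hIcc ht)).trans (by gcongr; exact hd.2)
  · filter_upwards [Measure.ae_ne volume 1] with t ht₁ ht
    rw [uIoc_of_le zero_le_one] at ht
    exact hf t ⟨ht.1, ht.2.lt_of_ne ht₁⟩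

lemma tendsto_halfMass_zero (hp : 2 < p) (hp' : p < 6) (hq : q ≤ 4) :
    Tendsto (halfMass p q) (𝓝[>] 0) (𝓝 0) := by
  have hbound : ∀ᶠ d : ℝ in 𝓝[>] 0, 0 < d ∧ d ^ (4 - q) ≤ 1 := by
    filter_upwards [Ioc_mem_nhdsGT zero_lt_one] with d hd
    exact ⟨hd.1, rpow_le_one hd.1.le hd.2 (sub_nonneg.2 hq)⟩
  suffices Tendsto (halfMass p q) (𝓝[>] 0) (𝓝 (∫ _ in (0 : ℝ)..1, 0)) by simpa using this
  refine tendsto_halfMass hp.le hbound fun t ht => ?_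
  have hpos : 0 < 1 - t ^ (p - 2) := sub_pos.2 (rpow_lt_one ht.1.le ht.2 (sub_pos.2 hp))
  have hsing : Tendsto (fun d : ℝ => 2 / p * d ^ (p - 6) * (1 - t ^ (p - 2))) (𝓝[>] 0) atTop :=
    ((tendsto_rpow_neg_nhdsGT_zero (by linarith)).const_mul_atTop (by positivity)).atTop_mul_const
      hpos
  refine tendsto_const_nhds.div_atTop (tendsto_sqrt_atTop.comp
    (tendsto_atTop_mono' _ (eventually_mem_nhdsWithin.mono fun d hd => ?_) hsing))
  exact le_add_of_nonneg_left (div_nonneg (rpow_nonneg (le_of_lt hd) _) (by norm_num))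

lemma continuousOn_halfMass (hp : 2 ≤ p) : ContinuousOn (halfMass p q) (Ioi 0) := by
  refine continuousOn_of_forall_continuousAt fun d hd => ?_
  have hd₀ : d ≠ 0 := ne_of_gt hd
  have hbound : ∀ᶠ e in 𝓝 d, 0 < e ∧ e ^ (4 - q) ≤ d ^ (4 - q) + 1 :=
    (lt_mem_nhds hd).and
      ((continuousAt_rpow_const d _ (.inl hd₀)).eventually_le_const (lt_add_one _))
  rw [ContinuousAt, halfMass_eq_integral hp hd]
  refine tendsto_halfMass hp hbound fun t ht => ?_
  have hcont : ContinuousAt (fun e => scaledRadicand p q e t) d :=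
    ((continuousAt_rpow_const d _ (.inl hd₀)).div_const 4).add
      ((continuousAt_const.mul (continuousAt_rpow_const d _ (.inl hd₀))).mul_const _)
  exact continuousAt_const.div hcont.sqrt
    (sqrt_pos.2 (scaledRadicand_pos hp hd (Ioo_subset_Icc_self ht))).ne'

lemma inv_two_mul_sqrt_le_halfMass (hp : 2 ≤ p) (hd : 0 < d) :
    (2 * √(d ^ (2 * q - 8) / 4 + 2 / p * d ^ (p - 6)))⁻¹ ≤ halfMass p q d := by
  have hlow : ∀ t ∈ Icc (0 : ℝ) 1, t / √(d ^ (2 * q - 8) / 4 + 2 / p * d ^ (p - 6)) ≤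
      t / √(scaledRadicand p q d t) := fun t ht => by
    have := ht.1
    have := sqrt_pos.2 (scaledRadicand_pos (q := q) hp hd ht)
    gcongr
    exact scaledRadicand_le (by linarith) hd.le ht.1
  rw [halfMass_eq_integral hp hd]
  refine le_of_eq_of_le ?_ (intervalIntegral.integral_mono_on zero_le_one
    ((continuous_id.div_const _).intervalIntegrable 0 1)
    ((continuousOn_div_sqrt_scaledRadicand hp hd).intervalIntegrable_of_Icc zero_le_one) hlow)
  simp only [id, intervalIntegral.integral_div, integral_id]
  ring

lemma exists_lt_halfMass (hp : 2 < p) (hp' : p < 6) (hq : q ≤ 4) (hμ : 0 < μ)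
    (hμq : q = 4 → μ < 2) : ∃ d, 0 < d ∧ μ / 2 < halfMass p q d := by
  have hlim : Tendsto (fun d : ℝ => 2 / p * d ^ (p - 6)) atTop (𝓝 0) := by
    simpa using (tendsto_rpow_neg_atTop (sub_pos.2 hp')).const_mul (2 / p)
  obtain ⟨L, hL, hLμ⟩ : ∃ L, Tendsto (fun d : ℝ => d ^ (2 * q - 8) / 4) atTop (𝓝 L) ∧
      L < (μ ^ 2)⁻¹ := by
    rcases hq.lt_or_eq with hq | rfl
    · refine ⟨0, ?_, by positivity⟩
      simpa using (tendsto_rpow_neg_atTop (by linarith : 0 < 8 - 2 * q)).div_const 4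
    · refine ⟨1 / 4, ?_, ?_⟩
      · norm_num
      · rw [one_div]
        exact inv_strictAnti₀ (by positivity) (by nlinarith [hμq rfl])
  obtain ⟨d, hlt, hd⟩ := (((hL.add hlim).eventually_lt_const (by simpa using hLμ)).and
    (eventually_gt_atTop 0)).exists
  have := rpow_pos_of_pos hd (2 * q - 8)
  have := rpow_pos_of_pos hd (p - 6)
  refine ⟨d, hd, lt_of_lt_of_le ?_ (inv_two_mul_sqrt_le_halfMass hp.le hd)⟩
  have hsqrt : √(d ^ (2 * q - 8) / 4 + 2 / p * d ^ (p - 6)) < μ⁻¹ := by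
    rwa [sqrt_lt' (by positivity), inv_pow]
  calc μ / 2 = (2 * μ⁻¹)⁻¹ := by field_simp
    _ < _ := by gcongr

theorem exists_halfMass_eq (hp : 2 < p) (hp' : p < 6) (hq : q ≤ 4) (hμ : 0 < μ)
    (hμq : q = 4 → μ < 2) : ∃ c, 0 < c ∧ halfMass p q c = μ / 2 := by
  obtain ⟨d, hd, hμd⟩ := exists_lt_halfMass hp hp' hq hμ hμq
  obtain ⟨e, he, hμe⟩ := ((((tendsto_halfMass_zero hp hp' hq).eventually_lt_const
    (half_pos hμ))).and eventually_mem_nhdsWithin).exists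
  exact isPreconnected_Ioi.intermediate_value hμe hd (continuousOn_halfMass hp.le)
    ⟨he.le, hμd.le⟩

/-! ### Ground states -/

theorem reducedEnergy_lt_of_ne (hp : 2 < p) (hp' : p < 6) (hq : 2 ≤ q) (hq' : q ≤ 4)
    (hc : 0 < c) (hcμ : halfMass p q c = μ / 2) (hd : 0 ≤ d) (hdc : d ≠ c) :
    reducedEnergy p q μ c < reducedEnergy p q μ d := by
  have hmono := strictMonoOn_halfMass (q := q) hp hp' hq'
  have hcont := continuous_reducedEnergy (μ := μ) hp hq
  rcases hdc.lt_or_gt with hdc | hcd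
  · refine strictAntiOn_of_deriv_neg (convex_Icc 0 c) hcont.continuousOn (fun e he => ?_)
      ⟨hd, hdc.le⟩ ⟨hc.le, le_rfl⟩ hdc
    rw [interior_Icc] at he
    obtain ⟨ω', hω', hderiv⟩ := exists_hasDerivAt_frequency hp hq he.1
    rw [(hasDerivAt_reducedEnergy hp hq he.1 hderiv).deriv, ← hcμ]
    exact mul_neg_of_pos_of_neg hω' (sub_neg.2 (hmono he.1 hc he.2))
  · refine strictMonoOn_of_deriv_pos (convex_Ici c) hcont.continuousOn (fun e he => ?_)
      self_mem_Ici hcd.le hcd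
    rw [interior_Ici] at he
    obtain ⟨ω', hω', hderiv⟩ := exists_hasDerivAt_frequency hp hq (hc.trans he)
    rw [(hasDerivAt_reducedEnergy hp hq (hc.trans he) hderiv).deriv, ← hcμ]
    exact mul_pos hω' (sub_pos.2 (hmono hc (hc.trans he) he))

namespace IsSobolev

lemma reducedEnergy_le_Ffun (h : IsSobolev u u') (hp : 2 < p) (hq : 0 < q) {z : ℝ}
    (hz : ∀ x, |u x| ≤ |u z|) : reducedEnergy p q (mass u) |u z| ≤ Ffun p q u u' := by
  have hpow : |u 0| ^ q ≤ |u z| ^ q := rpow_le_rpow (abs_nonneg _) (hz 0) hq.le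
  have := div_nonneg (sub_nonneg.2 hpow) hq.le
  rw [h.Ffun_eq_reducedEnergy hp hz, add_assoc]
  exact le_add_of_nonneg_right (by positivity)

theorem reducedEnergy_le_Ffun_of_halfMass_eq (h : IsSobolev u u') (hp : 2 < p) (hp' : p < 6)
    (hq : 2 ≤ q) (hq' : q ≤ 4) (hc : 0 < c) (hcu : halfMass p q c = mass u / 2) :
    reducedEnergy p q (mass u) c ≤ Ffun p q u u' := by
  obtain ⟨z, hz⟩ := h.exists_abs_le
  refine le_trans ?_ (h.reducedEnergy_le_Ffun hp (by linarith) hz)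
  rcases eq_or_ne |u z| c with hzc | hzc
  · rw [hzc]
  · exact (reducedEnergy_lt_of_ne hp hp' hq hq' hc hcu (abs_nonneg _) hzc).le

theorem abs_zero_eq_and_ae_deriv_eq (h : IsSobolev u u') (hp : 2 < p) (hp' : p < 6)
    (hq : 2 ≤ q) (hq' : q ≤ 4) (hc : 0 < c) (hcu : halfMass p q c = mass u / 2)
    (hu : Ffun p q u u' ≤ reducedEnergy p q (mass u) c) :
    |u 0| = c ∧ (∀ x, |u x| ≤ c) ∧
      ∀ᵐ x, u' x = towards 0 x * solitonSlope p (frequency p q c) (u x) := by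
  have hq₀ : 0 < q := by linarith
  obtain ⟨z, hz⟩ := h.exists_abs_le
  have hzc : |u z| = c := by
    by_contra hzc
    exact ((reducedEnergy_lt_of_ne hp hp' hq hq' hc hcu (abs_nonneg _) hzc).trans_le
      (h.reducedEnergy_le_Ffun hp hq₀ hz)).not_ge hu
  have h₀c : |u 0| = c := by
    by_contra h₀c
    have hlt : |u 0| ^ q < c ^ q :=
      rpow_lt_rpow (abs_nonneg _) (((hz 0).trans_eq hzc).lt_of_ne h₀c) hq₀
    have := div_pos (sub_pos.2 hlt) hq₀
    rw [h.Ffun_eq_reducedEnergy hp hz, hzc] at hu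
    refine hu.not_gt ?_
    rw [add_assoc]
    exact lt_add_of_pos_right _ (by positivity)
  have hmax : ∀ x, |u x| ≤ |u 0| := by rwa [h₀c, ← hzc]
  refine ⟨h₀c, fun x => h₀c ▸ hmax x, ?_⟩
  have hsquare : ∫ x, (u' x - towards 0 x * solitonSlope p (frequency p q c) (u x)) ^ 2 = 0 := by
    rw [h.Ffun_eq_reducedEnergy hp hmax, h₀c, sub_self, zero_div, add_zero] at hu
    exact le_antisymm (by linarith) (integral_nonneg fun x => sq_nonneg _)
  have hint := (h.memLp_deriv.sub (memLp_towards_mul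
    (h.memLp_solitonSlope (ω := frequency p q c) hp) 0)).integrable_sq
  filter_upwards [(integral_eq_zero_iff_of_nonneg (fun x => sq_nonneg _) hint).1 hsquare] with x hx
  exact sub_eq_zero.1 (pow_eq_zero_iff two_ne_zero |>.1 hx)

theorem eq_of_Ffun_le (hu : IsSobolev u u') (hv : IsSobolev v v') (hp : 2 < p) (hp' : p < 6)
    (hq : 2 ≤ q) (hq' : q ≤ 4) (hc : 0 < c) (hcμ : halfMass p q c = μ / 2)
    (hmu : mass u = μ) (hmv : mass v = μ) (hu₀ : ∀ x, 0 ≤ u x) (hv₀ : ∀ x, 0 ≤ v x)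
    (huc : Ffun p q u u' ≤ reducedEnergy p q μ c) (hvc : Ffun p q v v' ≤ reducedEnergy p q μ c) :
    u = v := by
  subst hmu
  obtain ⟨hu0, hule, hu'⟩ := hu.abs_zero_eq_and_ae_deriv_eq hp hp' hq hq' hc hcμ huc
  obtain ⟨hv0, hvle, hv'⟩ := hv.abs_zero_eq_and_ae_deriv_eq hp hp' hq hq' hc (by rwa [hmv])
    (by rwa [hmv])
  simp only [abs_of_nonneg (hu₀ _), abs_of_nonneg (hv₀ _)] at hu0 hule hv0 hvle
  obtain ⟨K, hlip⟩ := exists_lipschitzOnWith_solitonSlope hp hc (ω := frequency p q c)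
    (by rw [radicand_frequency hc.le]; positivity)
  exact eq_of_ae_deriv_eq_towards_mul hu hv (continuous_solitonSlope hp) hlip
    (fun x => ⟨hu₀ x, hule x⟩) (fun x => ⟨hv₀ x, hvle x⟩) hu' hv' (hu0.trans hv0.symm)

end IsSobolev

theorem stmt11_general (hp : 2 < p) (hp' : p < 6) (hq : 2 < q) (hq' : q ≤ 4) (hμ : 0 < μ)
    (hμq : q = 4 → μ < 2) :
    (∃ C : ℝ, ∀ u u' : ℝ → ℝ, IsH1 u u' → mass u = μ → C ≤ Ffun p q u u') ∧
    (∃ u₀ u₀' : ℝ → ℝ, IsH1 u₀ u₀' ∧ mass u₀ = μ ∧ Ffun p q u₀ u₀' < 0) ∧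
    (∃ u u' : ℝ → ℝ, IsH1 u u' ∧ mass u = μ ∧
      ∀ v v' : ℝ → ℝ, IsH1 v v' → mass v = μ → Ffun p q u u' ≤ Ffun p q v v') ∧
    (∀ u u' v v' : ℝ → ℝ,
      IsH1 u u' → (∀ x, 0 ≤ u x) → mass u = μ →
      (∀ w w' : ℝ → ℝ, IsH1 w w' → mass w = μ → Ffun p q u u' ≤ Ffun p q w w') →
      IsH1 v v' → (∀ x, 0 ≤ v x) → mass v = μ →
      (∀ w w' : ℝ → ℝ, IsH1 w w' → mass w = μ → Ffun p q v v' ≤ Ffun p q w w') →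
      u = v) := by
  obtain ⟨c, hc, hcμ⟩ := exists_halfMass_eq hp hp' hq' hμ hμq
  obtain ⟨u₀, u₀', hu₀, hmass, henergy⟩ :=
    exists_isSobolev_Ffun_eq_reducedEnergy (q := q) hp hc
  have hmu₀ : mass u₀ = μ := by linarith
  rw [hmu₀] at henergy
  have hsob {u u' : ℝ → ℝ} (hu : IsH1 u u') (hmu : mass u = μ) : IsSobolev u u' :=
    hu.isSobolev (hmu ▸ hμ.ne')
  have hlower {u u' : ℝ → ℝ} (hu : IsH1 u u') (hmu : mass u = μ) :
      reducedEnergy p q μ c ≤ Ffun p q u u' := by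
    subst hmu
    exact (hsob hu rfl).reducedEnergy_le_Ffun_of_halfMass_eq hp hp' hq.le hq' hc hcμ
  have hneg : reducedEnergy p q μ c < 0 :=
    (reducedEnergy_lt_of_ne hp hp' hq.le hq' hc hcμ le_rfl hc.ne).trans_eq
      (reducedEnergy_zero hp hq)
  refine ⟨⟨_, fun _ _ => hlower⟩, ⟨u₀, u₀', hu₀.isH1, hmu₀, henergy ▸ hneg⟩,
    ⟨u₀, u₀', hu₀.isH1, hmu₀, fun _ _ hv hmv => henergy ▸ hlower hv hmv⟩, ?_⟩
  intro u u' v v' hu hu_nonneg hmu hu_min hv hv_nonneg hmv hv_min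
  exact (hsob hu hmu).eq_of_Ffun_le (hsob hv hmv) hp hp' hq.le hq' hc hcμ hmu hmv
    hu_nonneg hv_nonneg
    (henergy ▸ hu_min u₀ u₀' hu₀.isH1 hmu₀) (henergy ▸ hv_min u₀ u₀' hu₀.isH1 hmu₀)

theorem stmt11 (p μ : ℝ) (hp : 2 < p) (hp' : p < 6) (hμ : 0 < μ) (hμ' : μ < 2) :
    (∃ C : ℝ, ∀ u u' : ℝ → ℝ, IsH1 u u' → mass u = μ → C ≤ Ffun p 4 u u') ∧
    (∃ u₀ u₀' : ℝ → ℝ, IsH1 u₀ u₀' ∧ mass u₀ = μ ∧ Ffun p 4 u₀ u₀' < 0) ∧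
    (∃ u u' : ℝ → ℝ, IsH1 u u' ∧ mass u = μ ∧
      ∀ v v' : ℝ → ℝ, IsH1 v v' → mass v = μ → Ffun p 4 u u' ≤ Ffun p 4 v v') ∧
    (∀ u u' v v' : ℝ → ℝ,
      IsH1 u u' → (∀ x, 0 ≤ u x) → mass u = μ →
      (∀ w w' : ℝ → ℝ, IsH1 w w' → mass w = μ → Ffun p 4 u u' ≤ Ffun p 4 w w') →
      IsH1 v v' → (∀ x, 0 ≤ v x) → mass v = μ →
      (∀ w w' : ℝ → ℝ, IsH1 w w' → mass w = μ → Ffun p 4 v v' ≤ Ffun p 4 w w') →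
      u = v) :=
  stmt11_general hp hp' (by norm_num) le_rfl hμ fun _ => hμ'
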